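/- Let m and ℓ be positive integers, let p be a nonzero integer and q an integer. If x, y ∈ G(m,ℓ) satisfy x^p = Δ^q and y^p = Δ^q, then x and y are conjugate in G(m,ℓ). -/

import Mathlib

/-- The word `a_i a_{i+1} ⋯ a_{i+p-1}` (indices mod `m`) in the free group on `ZMod m`. -/
def circWord (m : ℕ) (i : ZMod m) (p : ℕ) : FreeGroup (ZMod m) :=
  ((List.range p).map (fun k => FreeGroup.of (i + (k : ZMod m)))).prod

/-- The defining relations of the circular group `G(m,ℓ)`. -/
def circRels (m ℓ : ℕ) : Set (FreeGroup (ZMod m)) :=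
  { r | ∃ i : ZMod m, r = circWord m i ℓ * (circWord m (i + 1) ℓ)⁻¹ }

/-- The circular group `G(m,ℓ)`. -/
abbrev CircularGroup (m ℓ : ℕ) := PresentedGroup (circRels m ℓ)

/-- The generator `a_i` of the circular group `G(m,ℓ)`. -/
def circGen (m ℓ : ℕ) (i : ZMod m) : CircularGroup m ℓ :=
  PresentedGroup.of i

/-- The element `s(i,p) = a_i a_{i+1} ⋯ a_{i+p-1}` of the circular group `G(m,ℓ)`. -/
def circS (m ℓ : ℕ) (i : ZMod m) (p : ℕ) : CircularGroup m ℓ :=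
  ((List.range p).map (fun k => circGen m ℓ (i + (k : ZMod m)))).prod

/-- The Garside element `Δ = s(0,ℓ)` of the circular group `G(m,ℓ)`. -/
def circDelta (m ℓ : ℕ) : CircularGroup m ℓ := circS m ℓ 0 ℓ

open Monoid

/-- A torsion element of a free product of groups is conjugate into one of the factors. -/
theorem Monoid.CoprodI.exists_eq_conj_of_of_pow_eq_one {ι : Type*} [Nonempty ι] {G : ι → Type*}
    [∀ i, Group (G i)] {n : ℕ} (hn : n ≠ 0) {x : CoprodI G} (hx : x ^ n = 1) :
    ∃ (g : CoprodI G) (i : ι) (h : G i), x = g * CoprodI.of h * g⁻¹ := by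
  classical
  obtain ⟨w, rfl⟩ := (CoprodI.Word.equiv (M := G)).symm.surjective x
  change w.prod ^ n = 1 at hx
  change ∃ (g : CoprodI G) (i : ι) (h : G i), w.prod = g * CoprodI.of h * g⁻¹
  induction hk : w.toList.length using Nat.strong_induction_on generalizing w with
  | _ k ih =>
  obtain ⟨l, ne_one, chain⟩ := w
  have of_conj (c : CoprodI G) (w' : CoprodI.Word G) (hlen : w'.toList.length < k)
      (hc : w'.prod = c * CoprodI.Word.prod ⟨l, ne_one, chain⟩ * c⁻¹) :
      ∃ (g : CoprodI G) (i : ι) (h : G i),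
        CoprodI.Word.prod ⟨l, ne_one, chain⟩ = g * CoprodI.of h * g⁻¹ := by
    have hw' : w'.prod ^ n = 1 := by rw [hc, conj_pow, hx]; group
    obtain ⟨g, i, h, hg⟩ := ih _ hlen w' hw' rfl
    refine ⟨c⁻¹ * g, i, h, ?_⟩
    rw [hc] at hg
    calc _ = c⁻¹ * (c * CoprodI.Word.prod ⟨l, ne_one, chain⟩ * c⁻¹) * c := by group
      _ = _ := by rw [hg]; group
  match l, List.eq_nil_or_concat l.tail with
  | [], _ => exact ⟨1, Classical.arbitrary ι, 1, by simp [CoprodI.Word.prod]⟩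
  | [a], _ => exact ⟨1, a.1, a.2, by simp [CoprodI.Word.prod]⟩
  | a :: _, .inr ⟨mid, b, hb⟩ =>
    rw [List.tail_cons, List.concat_eq_append] at hb
    subst hb
    by_cases hab : a.1 = b.1
    · obtain ⟨i, α⟩ := a
      obtain ⟨j, β⟩ := b
      obtain rfl : i = j := hab
      have chain' : (⟨i, α⟩ :: mid : List (Σ i, G i)).IsChain (fun l l' => l.1 ≠ l'.1) := by
        rw [← List.cons_append] at chain
        exact chain.left_of_append
      have ne_one' : ∀ l ∈ mid, l.2 ≠ 1 := fun l hl => ne_one l (by simp [hl])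
      by_cases hβα : β * α = 1
      · refine of_conj (CoprodI.of β) ⟨mid, ne_one', chain'.tail⟩ ?_ ?_
        · simp [← hk]
        · have : CoprodI.of β * CoprodI.of α = (1 : CoprodI G) := by
            rw [← map_mul, hβα, map_one]
          simp [CoprodI.Word.prod, ← mul_assoc, this]
      · refine of_conj (CoprodI.of β) ⟨⟨i, β * α⟩ :: mid, ?_, ?_⟩ ?_ ?_
        · simpa [hβα] using ne_one'
        · rw [List.isChain_cons] at chain' ⊢
          exact chain'
        · simp [← hk]
        · simp [CoprodI.Word.prod, mul_assoc]
    · exfalso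
      set L := a :: (mid ++ [b]) with hL
      have chainPow : ∀ t : ℕ, ((List.replicate t L).flatten).IsChain (fun l l' => l.1 ≠ l'.1) := by
        intro t
        induction t with
        | zero => simp
        | succ t iht =>
          rw [List.replicate_succ, List.flatten_cons, List.isChain_append]
          refine ⟨chain, iht, fun x hx y hy => ?_⟩
          obtain rfl : b = x := by
            rw [hL, ← List.cons_append, List.getLast?_concat] at hx
            exact Option.some_injective _ hx
          cases t with
          | zero => simp at hy
          | succ t =>
            obtain rfl : a = y := by simpa [hL, List.replicate_succ] using hy
            exact fun h => hab h.symm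
      let W : CoprodI.Word G := ⟨(List.replicate n L).flatten, by
        intro l hl
        obtain ⟨l', hl', hll'⟩ := List.mem_flatten.1 hl
        rw [List.eq_of_mem_replicate hl'] at hll'
        exact ne_one l hll', chainPow n⟩
      have hW : W.prod = CoprodI.Word.empty.prod := by
        rw [CoprodI.Word.prod_empty, ← hx]
        simp [W, hL, CoprodI.Word.prod, List.map_flatten, List.prod_flatten]
      have := congrArg CoprodI.Word.toList 
        (CoprodI.Word.equiv.symm.injective (a₁ := W) (a₂ := CoprodI.Word.empty) hW)
      simp [W, CoprodI.Word.empty, hn, hL] at this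

theorem List.prod_range_mul_apply {K : Type*} [Monoid K] (f : ℕ → K) (n l : ℕ) :
    ((List.range l).map fun k => f (n + k)).prod * f (n + l) =
      f n * ((List.range l).map fun k => f (n + 1 + k)).prod := by
  rw [← List.prod_range_succ (fun k => f (n + k)), List.prod_range_succ']
  simp only [add_zero, add_assoc, add_comm 1]

/-- If shifting the index by `d` conjugates the sequence `f` by `E`, then so does shifting by
`d * t` with `E ^ t`. -/
theorem apply_mul_add_eq_conj {K : Type*} [Group K] {f : ℕ → K} {E : K} {d : ℕ}
    (hf : ∀ n, f (d + n) = E⁻¹ * f n * E) (t n : ℕ) :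
    f (d * t + n) = (E ^ t)⁻¹ * f n * E ^ t := by
  induction t with
  | zero => simp
  | succ t ih =>
    rw [show d * (t + 1) + n = d + (d * t + n) by ring, hf, ih, pow_succ]
    group

theorem List.prod_range_mul_of_conj {K : Type*} [Group K] {f : ℕ → K} {E : K} {d : ℕ}
    (hf : ∀ n, f (d + n) = E⁻¹ * f n * E) (t : ℕ) :
    ((List.range (d * t)).map f).prod = (((List.range d).map f).prod * E⁻¹) ^ t * E ^ t := by
  induction t with
  | zero => simp
  | succ t ih =>
    have hconj (l : List ℕ) : (l.map fun n => f (d * t + n)).prod =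
        (E ^ t)⁻¹ * (l.map f).prod * E ^ t := by
      induction l with
      | nil => simp
      | cons a l ihl =>
        rw [List.map_cons, List.prod_cons, ihl, apply_mul_add_eq_conj hf, List.map_cons,
          List.prod_cons]
        group
    rw [mul_add, mul_one, List.range_add, List.map_append, List.prod_append, List.map_map, ih]
    simp only [Function.comp_def]
    rw [hconj, pow_succ _ t, pow_succ' E t]
    group

/-- If shifting the index by `l` conjugates the sequence `f` by `D` and the product of the first `l`
terms is `D`, then so is the product of any `l` consecutive terms. -/
theorem List.prod_range_add_eq {K : Type*} [Group K] {f : ℕ → K} {D : K} {l : ℕ}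
    (hf : ∀ n, f (n + l) = D⁻¹ * f n * D) (h0 : ((List.range l).map f).prod = D) (n : ℕ) :
    ((List.range l).map fun k => f (n + k)).prod = D := by
  induction n with
  | zero => simpa using h0
  | succ n ih =>
    have := List.prod_range_mul_apply f n l
    rw [ih, hf] at this
    rw [← mul_right_inj (f n), ← this]
    group

/-- The sequence which starts with `e 0, …, e (d - 1)` and is conjugated by `E` when the index is
shifted by `d`. -/
def conjSeq {K : Type*} [Group K] (d : ℕ) (E : K) (e : ℕ → K) (n : ℕ) : K :=
  (E ^ (n / d))⁻¹ * e (n % d) * E ^ (n / d)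

theorem conjSeq_add {K : Type*} [Group K] {d : ℕ} (hd : 0 < d) (E : K) (e : ℕ → K) (n : ℕ) :
    conjSeq d E e (d + n) = E⁻¹ * conjSeq d E e n * E := by
  rw [conjSeq, conjSeq, Nat.add_div_left _ hd, Nat.add_mod_left, pow_succ]
  group

theorem conjSeq_of_lt {K : Type*} [Group K] {d : ℕ} (E : K) (e : ℕ → K) {n : ℕ} (hn : n < d) :
    conjSeq d E e n = e n := by
  simp [conjSeq, Nat.div_eq_of_lt hn, Nat.mod_eq_of_lt hn]

/-- The homomorphism from a cyclic group of order `n` (infinite if `n = 0`) sending the generator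
to `g`. -/
def zmodPowHom {K : Type*} [Group K] (n : ℕ) (g : K) (hg : g ^ n = 1) :
    Multiplicative (ZMod n) →* K :=
  AddMonoidHom.toMultiplicativeLeft
    (ZMod.lift n ⟨zmultiplesHom (Additive K) (Additive.ofMul g), by
      simpa [← ofMul_pow] using hg⟩)

theorem zmodPowHom_ofAdd_intCast {K : Type*} [Group K] (n : ℕ) (g : K) (hg : g ^ n = 1) (k : ℤ) :
    zmodPowHom n g hg (Multiplicative.ofAdd (k : ZMod n)) = g ^ k := by
  simp [zmodPowHom]

section CircularGroup

variable {m ℓ : ℕ}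

theorem circWord_eq_prod (i : ZMod m) (p : ℕ) :
    circWord m i p = ((List.range p).map fun k : ℕ => FreeGroup.of (i + (k : ZMod m))).prod := by
  simp [circWord, ← List.map_eq_flatMap, Function.comp_def]

theorem circS_eq_prod (i : ZMod m) (p : ℕ) :
    circS m ℓ i p = ((List.range p).map fun k : ℕ => circGen m ℓ (i + (k : ZMod m))).prod := by
  simp [circS, ← List.map_eq_flatMap, Function.comp_def]

theorem circS_eq_prod_natCast (n p : ℕ) :
    circS m ℓ n p = ((List.range p).map fun k => circGen m ℓ ((n + k : ℕ) : ZMod m)).prod := by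
  simp [circS_eq_prod]

theorem mk_circWord (i : ZMod m) (p : ℕ) :
    PresentedGroup.mk (circRels m ℓ) (circWord m i p) = circS m ℓ i p := by
  rw [circWord_eq_prod, circS_eq_prod, map_list_prod, List.map_map]
  rfl

theorem circS_add_one (i : ZMod m) : circS m ℓ (i + 1) ℓ = circS m ℓ i ℓ := by
  have h : PresentedGroup.mk (circRels m ℓ) (circWord m i ℓ * (circWord m (i + 1) ℓ)⁻¹) = 1 :=
    PresentedGroup.one_of_mem ⟨i, rfl⟩
  rw [map_mul, map_inv, mk_circWord, mk_circWord, mul_inv_eq_one] at h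
  exact h.symm

theorem circS_eq_circDelta [NeZero m] (i : ZMod m) : circS m ℓ i ℓ = circDelta m ℓ := by
  have h (n : ℕ) : circS m ℓ n ℓ = circDelta m ℓ := by
    induction n with
    | zero => simp [circDelta]
    | succ n ih => rw [Nat.cast_succ, circS_add_one, ih]
  simpa using h i.val

theorem circGen_add [NeZero m] (i : ZMod m) :
    circGen m ℓ (i + ℓ) = (circDelta m ℓ)⁻¹ * circGen m ℓ i * circDelta m ℓ := by
  have h := List.prod_range_mul_apply (fun k => circGen m ℓ (k : ZMod m)) i.val ℓ
  rw [← circS_eq_prod_natCast, ← circS_eq_prod_natCast, circS_eq_circDelta,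
    circS_eq_circDelta] at h
  push_cast [ZMod.natCast_val, ZMod.cast_id] at h
  rw [mul_assoc, ← h]
  group

theorem circGen_add_intCast_mul [NeZero m] (t : ℤ) (i : ZMod m) :
    circGen m ℓ (i + (t : ZMod m) * (ℓ : ZMod m)) =
      (circDelta m ℓ ^ t)⁻¹ * circGen m ℓ i * circDelta m ℓ ^ t := by
  induction t using Int.induction_on with
  | zero => simp
  | succ t ih =>
    rw [show i + ((t + 1 : ℤ) : ZMod m) * (ℓ : ZMod m) =
        i + ((t : ℤ) : ZMod m) * (ℓ : ZMod m) + ℓ by push_cast; ring,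
      circGen_add, ih, zpow_add_one]
    group
  | pred t ih =>
    have h := circGen_add (ℓ := ℓ) (i + ((-t - 1 : ℤ) : ZMod m) * (ℓ : ZMod m))
    rw [show i + ((-t - 1 : ℤ) : ZMod m) * (ℓ : ZMod m) + ℓ =
        i + ((-t : ℤ) : ZMod m) * (ℓ : ZMod m) by push_cast; ring,
      ih] at h
    rw [zpow_sub_one]
    calc _ = circDelta m ℓ * ((circDelta m ℓ)⁻¹ *
          circGen m ℓ (i + ((-t - 1 : ℤ) : ZMod m) * (ℓ : ZMod m)) * circDelta m ℓ) *
          (circDelta m ℓ)⁻¹ := by group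
      _ = _ := by rw [← h]; group

/-- The homomorphism sending every generator of `G(m,ℓ)` to `1`, written multiplicatively. -/
def circLength (m ℓ : ℕ) : CircularGroup m ℓ →* Multiplicative ℤ :=
  PresentedGroup.toGroup (f := fun _ => Multiplicative.ofAdd 1) <| by
    rintro _ ⟨i, rfl⟩
    simp [circWord_eq_prod, map_list_prod, Function.comp_def]

theorem circLength_circS (i : ZMod m) (p : ℕ) :
    circLength m ℓ (circS m ℓ i p) = Multiplicative.ofAdd (p : ℤ) := by
  have h (j : ZMod m) : circLength m ℓ (circGen m ℓ j) = Multiplicative.ofAdd 1 :=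
    PresentedGroup.toGroup.of _
  rw [circS_eq_prod, map_list_prod, List.map_map]
  simp [Function.comp_def, h, ← ofAdd_nsmul]

end CircularGroup

section Decomposition

variable {d M L : ℕ} {r u : ℤ}

theorem circDelta_pow_commute [NeZero (d * M)] (x : CircularGroup (d * M) (d * L)) :
    Commute (circDelta (d * M) (d * L) ^ M) x := by
  have h : (MulAut.conj (circDelta (d * M) (d * L) ^ M)⁻¹).toMonoidHom =
      MonoidHom.id (CircularGroup (d * M) (d * L)) := by
    refine PresentedGroup.ext fun i => ?_
    have := circGen_add_intCast_mul (ℓ := d * L) (M : ℤ) i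
    have hz : (((M : ℤ) : ZMod (d * M)) * ((d * L : ℕ) : ZMod (d * M))) = 0 := by
      rw [Int.cast_natCast, ← Nat.cast_mul, ZMod.natCast_eq_zero_iff]
      exact ⟨L, by ring⟩
    rw [hz, add_zero, zpow_natCast] at this
    exact (by simpa [circGen] using this.symm :
      (circDelta (d * M) (d * L) ^ M)⁻¹ * PresentedGroup.of i *
        ((circDelta (d * M) (d * L) ^ M)⁻¹)⁻¹ = PresentedGroup.of i)
  have hx : (circDelta (d * M) (d * L) ^ M)⁻¹ * x * circDelta (d * M) (d * L) ^ M = x := by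
    conv_lhs => enter [2]; rw [← inv_inv (circDelta (d * M) (d * L) ^ M)]
    exact DFunLike.congr_fun h x
  rw [mul_assoc, inv_mul_eq_iff_eq_mul] at hx
  exact hx.symm

theorem circGen_natCast_add [NeZero (d * M)] (h : r * L + u * M = 1) (n : ℕ) :
    circGen (d * M) (d * L) ((d + n : ℕ) : ZMod (d * M)) =
      (circDelta (d * M) (d * L) ^ r)⁻¹ * circGen (d * M) (d * L) n *
        circDelta (d * M) (d * L) ^ r := by
  rw [← circGen_add_intCast_mul]
  congr 1
  have hM : ((d * M : ℕ) : ZMod (d * M)) = 0 := ZMod.natCast_self _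
  have h' := congrArg (Int.cast : ℤ → ZMod (d * M)) h
  push_cast at hM h' ⊢
  linear_combination (-(d : ZMod (d * M))) * h' + (u : ZMod (d * M)) * hM

/-- The element `s(0,d) Δ^{-r}` of `G(dM,dL)`. -/
def circGamma (d M L : ℕ) (r : ℤ) : CircularGroup (d * M) (d * L) :=
  circS (d * M) (d * L) 0 d * (circDelta (d * M) (d * L) ^ r)⁻¹

theorem circGamma_pow [NeZero (d * M)] (h : r * L + u * M = 1) :
    circGamma d M L r ^ L = (circDelta (d * M) (d * L) ^ M) ^ u := by
  have hprod := List.prod_range_mul_of_conj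
    (f := fun n : ℕ => circGen (d * M) (d * L) n) (circGen_natCast_add h) L
  have hS (p : ℕ) : circS (d * M) (d * L) 0 p =
      ((List.range p).map fun k : ℕ => circGen (d * M) (d * L) k).prod := by
    simp [circS_eq_prod]
  rw [← hS, ← hS, ← circGamma, circS_eq_circDelta, ← zpow_natCast (_ ^ r), ← zpow_mul] at hprod
  rw [← zpow_natCast _ M, ← zpow_mul, show (M : ℤ) * u = 1 - r * L by linarith, zpow_sub, zpow_one]
  exact eq_mul_inv_of_mul_eq hprod.symm

theorem circLength_circGamma (h : r * L + u * M = 1) :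
    circLength (d * M) (d * L) (circGamma d M L r) = Multiplicative.ofAdd (d * (u * M)) := by
  rw [circGamma, circDelta, map_mul, map_inv, map_zpow, circLength_circS, circLength_circS,
    ← ofAdd_zsmul, ← ofAdd_neg, ← ofAdd_add]
  congr 1
  rw [smul_eq_mul, show u * M = 1 - r * L by linarith]
  push_cast
  ring

/-- `G(dM,dL)` maps to any group containing elements `D`, `C` and `e 0, …, e (d - 1)` with
`D ^ M = C ^ L = 1` and `e 0 ⋯ e (d - 1) = C D ^ r`. -/
theorem exists_circularGroup_hom {K : Type*} [Group K] (hd : 0 < d) (hM : 0 < M)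
    (h : r * L + u * M = 1) {D C : K} (hD : D ^ M = 1) (hC : C ^ L = 1) {e : ℕ → K}
    (he : ((List.range d).map e).prod = C * D ^ r) :
    ∃ φ : CircularGroup (d * M) (d * L) →* K, φ (circDelta (d * M) (d * L)) = D ∧
      ∀ n : ℕ, φ (circGen (d * M) (d * L) n) = conjSeq d (D ^ r) e n := by
  have : NeZero (d * M) := ⟨by positivity⟩
  set A := conjSeq d (D ^ r) e
  have hadd : ∀ n, A (d + n) = (D ^ r)⁻¹ * A n * D ^ r := conjSeq_add hd _ _
  have hEM : (D ^ r) ^ M = 1 := by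
    rw [← zpow_natCast, zpow_comm, zpow_natCast, hD, one_zpow]
  have hEL : (D ^ r) ^ L = D := by
    rw [← zpow_natCast, ← zpow_mul, show r * L = 1 - M * u by linarith, zpow_sub, zpow_mul,
      zpow_natCast, hD]
    simp
  have hperiod (n : ℕ) : A ((n : ZMod (d * M)).val) = A n := by
    rw [ZMod.val_natCast]
    conv_rhs => rw [← Nat.div_add_mod n (d * M), mul_assoc]
    rw [apply_mul_add_eq_conj hadd, pow_mul, hEM]
    simp
  have hshift (n : ℕ) : A (n + d * L) = D⁻¹ * A n * D := by
    rw [add_comm, apply_mul_add_eq_conj hadd, hEL]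
  have hzero : ((List.range (d * L)).map A).prod = D := by
    have : (List.range d).map A = (List.range d).map e :=
      List.map_congr_left fun n hn => conjSeq_of_lt _ _ (List.mem_range.1 hn)
    rw [List.prod_range_mul_of_conj hadd, this, he, hEL, mul_inv_cancel_right, hC, one_mul]
  have hword (n : ℕ) : FreeGroup.lift (fun k : ZMod (d * M) => A k.val)
      (circWord (d * M) n (d * L)) = D := by
    rw [circWord_eq_prod, map_list_prod, List.map_map, ← List.prod_range_add_eq hshift hzero n]
    congr 2
    funext k
    simp only [Function.comp_apply, FreeGroup.lift_apply_of]
    rw [← Nat.cast_add, hperiod]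
  have hrel : ∀ w ∈ circRels (d * M) (d * L),
      FreeGroup.lift (fun k : ZMod (d * M) => A k.val) w = 1 := by
    rintro _ ⟨i, rfl⟩
    obtain ⟨n, rfl⟩ := ZMod.natCast_zmod_surjective i
    rw [map_mul, map_inv, hword, ← Nat.cast_succ, hword, mul_inv_cancel]
  refine ⟨PresentedGroup.toGroup hrel, ?_, fun n => ?_⟩
  · rw [circDelta, ← mk_circWord, ← hword 0, Nat.cast_zero]
    rfl
  · exact (PresentedGroup.toGroup.of hrel).trans (hperiod n)

/-- The orders of the cyclic free factors of the central quotient of `G(dM,dL)`. -/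
def cyclicOrder (M L : ℕ) : ℕ → ℕ
  | 0 => M
  | 1 => L
  | _ + 2 => 0

/-- The cyclic free factors of the central quotient of `G(dM,dL)`. -/
def CyclicFactor (M L i : ℕ) : Type :=
  Multiplicative (ZMod (cyclicOrder M L i))

instance (M L i : ℕ) : Group (CyclicFactor M L i) :=
  inferInstanceAs (Group (Multiplicative (ZMod (cyclicOrder M L i))))

/-- The `k`-th power of the generator of a cyclic free factor. -/
def CyclicFactor.ofInt (M L i : ℕ) (k : ℤ) : CyclicFactor M L i :=
  Multiplicative.ofAdd (k : ZMod (cyclicOrder M L i))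

theorem CyclicFactor.ofInt_surjective (i : ℕ) : Function.Surjective (ofInt M L i) :=
  fun y => (ZMod.intCast_surjective (Multiplicative.toAdd y)).imp fun _ h =>
    congrArg Multiplicative.ofAdd h

theorem CyclicFactor.ofInt_one_pow (i : ℕ) : ofInt M L i 1 ^ cyclicOrder M L i = 1 := by
  change Multiplicative.ofAdd (cyclicOrder M L i • ((1 : ℤ) : ZMod (cyclicOrder M L i))) = 1
  simp

theorem CyclicFactor.eq_one_of_zpow_eq_one {i : ℕ} {y : CyclicFactor M L (i + 2)} {n : ℤ}
    (hn : n ≠ 0) (hy : y ^ n = 1) : y = 1 := by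
  have h : n • (Multiplicative.toAdd y : ℤ) = 0 := hy
  have h' : (Multiplicative.toAdd y : ℤ) = 0 := by simpa [hn] using h
  exact h'

/-- A root of a power of the central element `Δ ^ M` of `G(dM,dL)` is conjugate to a power of `Δ`
or to the product of a power of `s(0,d) Δ^{-r}` and a central element. -/
theorem exists_conj_of_zpow_eq (hd : 0 < d) (hM : 0 < M) (h : r * L + u * M = 1)
    {x : CircularGroup (d * M) (d * L)} {n t : ℤ} (hn : n ≠ 0)
    (hx : x ^ n = (circDelta (d * M) (d * L) ^ M) ^ t) :
    (∃ j : ℤ, IsConj (circDelta (d * M) (d * L) ^ j) x) ∨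
      ∃ j k : ℤ, IsConj (circGamma d M L r ^ j * (circDelta (d * M) (d * L) ^ M) ^ k) x := by
  have : NeZero (d * M) := ⟨by positivity⟩
  set Δ := circDelta (d * M) (d * L) with hΔ
  set γ := circGamma d M L r with hγ
  have hcomm : ∀ g, Commute (Δ ^ M) g := circDelta_pow_commute
  let Z := Subgroup.zpowers (Δ ^ M)
  have : Z.Normal := ⟨fun w hw g => by
    obtain ⟨k, rfl⟩ := Subgroup.mem_zpowers_iff.1 hw
    rwa [← ((hcomm g).zpow_left k).eq, mul_inv_cancel_right]⟩
  let π := QuotientGroup.mk' Z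
  have hπz (k : ℤ) : π ((Δ ^ M) ^ k) = 1 :=
    (QuotientGroup.eq_one_iff _).2 (Subgroup.zpow_mem_zpowers _ _)
  let gen (i : ℕ) : CoprodI (CyclicFactor M L) := CoprodI.of (CyclicFactor.ofInt M L i 1)
  have hgen (i : ℕ) : gen i ^ cyclicOrder M L i = 1 := by
    rw [← map_pow, CyclicFactor.ofInt_one_pow, map_one]
  let c : ℕ → CircularGroup (d * M) (d * L) ⧸ Z
    | 0 => π Δ
    | 1 => π γ
    | k + 2 => π (circGen (d * M) (d * L) ((k + 1 : ℕ) : ZMod (d * M)))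
  have hc (i : ℕ) : c i ^ cyclicOrder M L i = 1 := by
    match i with
    | 0 => simpa [c, cyclicOrder] using hπz 1
    | 1 =>
      change π γ ^ L = 1
      rw [← map_pow, hγ, circGamma_pow h]
      exact hπz u
    | k + 2 => simp [cyclicOrder]
  let ψ : CoprodI (CyclicFactor M L) →* CircularGroup (d * M) (d * L) ⧸ Z :=
    CoprodI.lift fun i : ℕ => zmodPowHom (cyclicOrder M L i) (c i) (hc i)
  have hψ (i : ℕ) (k : ℤ) :
      ψ (CoprodI.of (CyclicFactor.ofInt M L i k)) = c i ^ k :=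
    (CoprodI.lift_of _ _).trans (zmodPowHom_ofAdd_intCast ..)
  have hψgen (i : ℕ) : ψ (gen i) = c i := by
    simpa using hψ i 1
  let e : ℕ → CoprodI (CyclicFactor M L)
    | 0 => gen 1 * gen 0 ^ r * ((List.range (d - 1)).map fun k => gen (k + 2)).prod⁻¹
    | k + 1 => gen (k + 2)
  have he : ((List.range d).map e).prod = gen 1 * gen 0 ^ r := by
    obtain ⟨d', rfl⟩ := Nat.exists_eq_add_of_lt hd
    rw [List.prod_range_succ']
    simp only [e, zero_add, Nat.add_sub_cancel, inv_mul_cancel_right]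
  obtain ⟨φ, hφΔ, hφ⟩ := exists_circularGroup_hom hd hM h (hgen 0) (hgen 1) he
  have hψe (k : ℕ) : ψ (e k) = π (circGen (d * M) (d * L) k) := by
    match k with
    | 0 =>
      have hS : γ * Δ ^ r = circGen (d * M) (d * L) (0 : ℕ) *
          ((List.range (d - 1)).map fun k : ℕ =>
            circGen (d * M) (d * L) ((k + 1 : ℕ) : ZMod (d * M))).prod := by
        rw [hγ, circGamma, inv_mul_cancel_right,
          ← List.prod_range_succ' (fun k : ℕ => circGen (d * M) (d * L) k),
          Nat.succ_eq_add_one, Nat.sub_add_cancel hd]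
        simp [circS_eq_prod]
      have hprod : ψ ((List.range (d - 1)).map fun k => gen (k + 2)).prod =
          π ((List.range (d - 1)).map fun k : ℕ =>
            circGen (d * M) (d * L) ((k + 1 : ℕ) : ZMod (d * M))).prod := by
        rw [map_list_prod, map_list_prod, List.map_map, List.map_map]
        exact congrArg _ (List.map_congr_left fun k _ => hψgen (k + 2))
      change ψ (gen 1 * gen 0 ^ r * _) = _
      rw [map_mul, map_mul, map_inv, map_zpow, hprod, hψgen, hψgen]
      change π γ * π Δ ^ r * _ = _
      rw [← map_zpow, ← map_mul, hS, ← map_inv, ← map_mul, mul_inv_cancel_right]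
    | k + 1 => exact hψgen (k + 2)
  have hψφ : ψ.comp φ = π := by
    refine PresentedGroup.ext fun i => ?_
    obtain ⟨n, rfl⟩ := ZMod.natCast_zmod_surjective i
    change ψ (φ (circGen _ _ _)) = π (circGen _ _ _)
    have hconj := apply_mul_add_eq_conj
      (f := fun n : ℕ => circGen (d * M) (d * L) n) (circGen_natCast_add h) (n / d) (n % d)
    simp only [Nat.div_add_mod] at hconj
    rw [hφ, hconj, conjSeq]
    simp only [map_mul, map_inv, map_pow, map_zpow, hψe, hψgen]
    rfl
  have hφx : φ x ^ n = 1 := by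
    rw [← map_zpow, hx, map_zpow, map_pow, hφΔ, show gen 0 ^ M = 1 from hgen 0, one_zpow]
  obtain ⟨g, i, y, hy⟩ :=
    CoprodI.exists_eq_conj_of_of_pow_eq_one (Int.natAbs_ne_zero.2 hn)
      (pow_natAbs_eq_one.2 hφx)
  have hyn : y ^ n = 1 := by
    rw [hy, conj_zpow, conj_eq_one_iff, ← map_zpow] at hφx
    exact CoprodI.of_injective i (hφx.trans (map_one _).symm)
  obtain ⟨g', hg'⟩ := QuotientGroup.mk'_surjective Z (ψ g)
  have lift_conj (w : CircularGroup (d * M) (d * L)) (hw : ψ (CoprodI.of y) = π w) :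
      ∃ k : ℤ, IsConj (w * (Δ ^ M) ^ k) x := by
    have hπx : π (g' * w * g'⁻¹) = π x := by
      rw [← DFunLike.congr_fun hψφ x, MonoidHom.comp_apply, hy]
      simp only [map_mul, map_inv, hw, ← hg', π]
    obtain ⟨k, hk⟩ := Subgroup.mem_zpowers_iff.1 (QuotientGroup.eq.1 hπx)
    refine ⟨k, isConj_iff.2 ⟨g', ?_⟩⟩
    rw [← mul_assoc, mul_assoc (g' * w), ((hcomm g'⁻¹).zpow_left k).eq, ← mul_assoc, hk]
    group
  obtain ⟨j, hj⟩ := CyclicFactor.ofInt_surjective i y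
  have hψy : ψ (CoprodI.of y) = c i ^ j := by rw [← hj, hψ]
  match i with
  | 0 =>
    obtain ⟨k, hk⟩ := lift_conj (Δ ^ j) (by rw [hψy, map_zpow])
    refine .inl ⟨j + M * k, ?_⟩
    rwa [zpow_add, zpow_mul, zpow_natCast]
  | 1 =>
    obtain ⟨k, hk⟩ := lift_conj (γ ^ j) (by rw [hψy, map_zpow])
    exact .inr ⟨j, k, hk⟩
  | i + 2 =>
    obtain rfl : y = 1 := CyclicFactor.eq_one_of_zpow_eq_one hn hyn
    obtain ⟨k, hk⟩ := lift_conj 1 (by simp)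
    exact .inr ⟨0, k, by simpa using hk⟩

theorem isConj_of_circLength_eq (hd : 0 < d) (hM : 0 < M) (hL : 0 < L) (h : r * L + u * M = 1)
    {x y : CircularGroup (d * M) (d * L)} {n t t' : ℤ} (hn : n ≠ 0)
    (hx : x ^ n = (circDelta (d * M) (d * L) ^ M) ^ t)
    (hy : y ^ n = (circDelta (d * M) (d * L) ^ M) ^ t')
    (hxy : circLength (d * M) (d * L) x = circLength (d * M) (d * L) y) : IsConj x y := by
  have : NeZero (d * M) := ⟨by positivity⟩
  set Δ := circDelta (d * M) (d * L) with hΔ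
  set γ := circGamma d M L r with hγ
  have hd' : (d : ℤ) ≠ 0 := by positivity
  have hM' : (M : ℤ) ≠ 0 := by positivity
  have hL' : (L : ℤ) ≠ 0 := by positivity
  have conj_length {a b : CircularGroup (d * M) (d * L)} (hab : IsConj a b) :
      circLength _ _ a = circLength _ _ b :=
    isConj_iff_eq.1 ((circLength _ _).map_isConj hab)
  have hlenΔ (j : ℤ) : circLength _ _ (Δ ^ j) = Multiplicative.ofAdd (j * (d * L)) := by
    rw [map_zpow, hΔ, circDelta, circLength_circS, ← ofAdd_zsmul]
    simp
  have hlenγ (j k : ℤ) : circLength _ _ (γ ^ j * (Δ ^ M) ^ k) =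
      Multiplicative.ofAdd (d * M * (j * u + k * L)) := by
    rw [← zpow_natCast, ← zpow_mul, map_mul, hlenΔ, map_zpow, hγ, circLength_circGamma h,
      ← ofAdd_zsmul, ← ofAdd_add, smul_eq_mul]
    congr 1
    ring
  have hγL (s : ℤ) : γ ^ (L * s) = (Δ ^ M) ^ (u * s) := by
    rw [zpow_mul, zpow_natCast, hγ, circGamma_pow h, ← zpow_mul]
  have hcop : IsCoprime (L : ℤ) u := ⟨r, M, by linarith⟩
  have key (j k j' k' : ℤ) (hlen : circLength _ _ (γ ^ j * (Δ ^ M) ^ k) =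
      circLength _ _ (γ ^ j' * (Δ ^ M) ^ k')) :
      γ ^ j * (Δ ^ M) ^ k = γ ^ j' * (Δ ^ M) ^ k' := by
    rw [hlenγ, hlenγ, Multiplicative.ofAdd.apply_eq_iff_eq,
      mul_right_inj' (mul_ne_zero hd' hM')] at hlen
    obtain ⟨s, hs⟩ : (L : ℤ) ∣ j - j' :=
      hcop.dvd_of_dvd_mul_right ⟨k' - k, by linarith⟩
    obtain rfl : j = j' + L * s := by linarith
    obtain rfl : k' = u * s + k := by
      apply mul_right_cancel₀ hL'
      linarith
    rw [zpow_add, hγL, zpow_add, mul_assoc]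
  have mixed (i j k : ℤ) (hlen : circLength _ _ (Δ ^ i) =
      circLength _ _ (γ ^ j * (Δ ^ M) ^ k)) : Δ ^ i = γ ^ j * (Δ ^ M) ^ k := by
    rw [hlenΔ, hlenγ, Multiplicative.ofAdd.apply_eq_iff_eq] at hlen
    replace hlen : i * L = M * (j * u + k * L) := by
      apply mul_left_cancel₀ hd'
      linarith
    obtain ⟨s, rfl⟩ : (L : ℤ) ∣ j :=
      ⟨j * r + i - M * k, by linear_combination (-j) * h - hlen⟩
    obtain rfl : i = M * (u * s + k) := by
      apply mul_right_cancel₀ hL'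
      linarith
    rw [hγL, ← zpow_add, zpow_mul, zpow_natCast]
  have hΔinj (i j : ℤ) (hlen : circLength _ _ (Δ ^ i) = circLength _ _ (Δ ^ j)) : i = j := by
    rw [hlenΔ, hlenΔ, Multiplicative.ofAdd.apply_eq_iff_eq] at hlen
    exact mul_right_cancel₀ (mul_ne_zero hd' hL') hlen
  rcases exists_conj_of_zpow_eq hd hM h hn hx with ⟨i, hi⟩ | ⟨i, k, hi⟩ <;>
  rcases exists_conj_of_zpow_eq hd hM h hn hy with ⟨j, hj⟩ | ⟨j, k', hj⟩ <;>
  have hlen := (conj_length hi).trans (hxy.trans (conj_length hj).symm)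
  · rw [hΔinj _ _ hlen] at hi
    exact hi.symm.trans hj
  · rw [mixed _ _ _ hlen] at hi
    exact hi.symm.trans hj
  · rw [mixed _ _ _ hlen.symm] at hj
    exact hi.symm.trans hj
  · rw [key _ _ _ _ hlen] at hi
    exact hi.symm.trans hj

end Decomposition

/-- Any two `(p,q)`-periodic elements of `G(m,ℓ)` are conjugate. -/
theorem periodic_are_conjugate_circular (m ℓ : ℕ) (hm : 0 < m) (hℓ : 0 < ℓ)
    (p : ℤ) (hp : p ≠ 0) (q : ℤ) (x y : CircularGroup m ℓ)
    (hx : x ^ p = (circDelta m ℓ) ^ q) (hy : y ^ p = (circDelta m ℓ) ^ q) :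
    IsConj x y := by
  have hd : 0 < m.gcd ℓ := Nat.gcd_pos_of_pos_left _ hm
  obtain ⟨M, L, hcop, hM, hL⟩ := Nat.exists_coprime m ℓ
  generalize m.gcd ℓ = d at hd hM hL
  rw [mul_comm] at hM hL
  subst hM hL
  obtain ⟨r, u, h⟩ := (Nat.isCoprime_iff_coprime.2 hcop).symm
  have hM : 0 < M := Nat.pos_of_mul_pos_left hm
  have hL : 0 < L := Nat.pos_of_mul_pos_left hℓ
  have hroot {w : CircularGroup (d * M) (d * L)} (hw : w ^ p = circDelta (d * M) (d * L) ^ q) :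
      w ^ (p * M) = (circDelta (d * M) (d * L) ^ M) ^ q := by
    rw [zpow_mul, hw, ← zpow_natCast _ M, zpow_comm]
  refine isConj_of_circLength_eq hd hM hL h (mul_ne_zero hp (by positivity)) (hroot hx)
    (hroot hy) ?_
  have hlen := congrArg (circLength (d * M) (d * L)) (hx.trans hy.symm)
  rw [map_zpow, map_zpow] at hlen
  exact zpow_left_injective hp hlen
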